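/- There exist a sufficiently small constant c_γ > 0 and a constant k_0 such that for all integers k ≥ k_0 and all margins 0 < γ_i ≤ c_γ the following monotonicity holds: for unit vectors w_1, x_1, w_2, x_2 ∈ ℝ^m and labels y_1, y_2 ∈ {−1,1} with 0 ≤ y_1⟨w_1,x_1⟩ ≤ y_2⟨w_2,x_2⟩ ≤ γ_i, one has Pr_{A,t}[ y_1⟨h_{A,t}(w_1), A x_1⟩ > γ_i/2 ] ≤ Pr_{A,t}[ y_2⟨h_{A,t}(w_2), A x_2⟩ > γ_i/2 ]. -/

import Mathlib

open MeasureTheory ProbabilityTheory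

noncomputable section

/-- Dot product on `Fin m → ℝ`. -/
def dotp {m : ℕ} (w x : Fin m → ℝ) : ℝ := ∑ j, w j * x j

/-- Margin loss `L_D^γ(w)` of `w` under a distribution `D` on `ℝ^m × ℝ`
(labels are encoded as reals in `{-1,1}`). -/
def lossD {m : ℕ} (D : Measure ((Fin m → ℝ) × ℝ)) (γ : ℝ) (w : Fin m → ℝ) : ℝ :=
  (D {p | p.2 * dotp w p.1 ≤ γ}).toReal

/-- Empirical margin loss `L_S^γ(w)` on a training set `S` of `n` labeled points. -/
def lossS {m n : ℕ} (S : Fin n → (Fin m → ℝ) × ℝ) (γ : ℝ) (w : Fin m → ℝ) : ℝ :=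
  (Nat.card {i : Fin n // (S i).2 * dotp w (S i).1 ≤ γ} : ℝ) / n

/-- The i.i.d. sample measure `D^n` over training sets of size `n`. -/
def trainM {m : ℕ} (D : Measure ((Fin m → ℝ) × ℝ)) (n : ℕ) :
    Measure (Fin n → (Fin m → ℝ) × ℝ) := Measure.pi fun _ => D

/-- Spacing of the rounding grid: `(10 √k)⁻¹`. -/
def gridStep (k : ℕ) : ℝ := (10 * Real.sqrt k)⁻¹

/-- The largest grid point `(1/2)(10√k)⁻¹ + z(10√k)⁻¹ ≤ g`. -/
def roundDown (k : ℕ) (g : ℝ) : ℝ :=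
  gridStep k / 2 + (⌊(g - gridStep k / 2) / gridStep k⌋ : ℝ) * gridStep k

/-- The probability `p(z)` of rounding `g` down, chosen so the rounding is unbiased. -/
def roundProb (k : ℕ) (g : ℝ) : ℝ := 1 - (g - roundDown k g) / gridStep k

/-- Matrix-vector product, `(Aw)_i = ∑ j A i j * w j`. -/
def matVec {k m : ℕ} (A : Fin k → Fin m → ℝ) (w : Fin m → ℝ) : Fin k → ℝ :=
  fun i => ∑ j, A i j * w j

/-- The randomized rounding `h_{A,t}(w)` of `Aw` to the grid. -/
def hRound {k m : ℕ} (A : Fin k → Fin m → ℝ) (t : Fin k → ℝ) (w : Fin m → ℝ) :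
    Fin k → ℝ :=
  fun i => if t i ≤ roundProb k (matVec A w i)
    then roundDown k (matVec A w i)
    else roundDown k (matVec A w i) + gridStep k

/-- The joint law of `(A, t)`: `A` has i.i.d. `N(0,1/k)` entries and `t` has i.i.d.
uniform `[0,1]` coordinates, independent of `A`. -/
def roundMeasure (k m : ℕ) : Measure ((Fin k → Fin m → ℝ) × (Fin k → ℝ)) :=
  (Measure.pi fun _ : Fin k => Measure.pi fun _ : Fin m =>
      gaussianReal 0 (k : NNReal)⁻¹).prod
    (Measure.pi fun _ : Fin k => volume.restrict (Set.Icc (0 : ℝ) 1))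

/-- Reduced setup: the data domain `X ⊆ S^d ⊂ ℝ^{d+1}` of unit vectors whose first
`d` coordinates have norm at most `cγ`. -/
def Xset (d : ℕ) (cγ : ℝ) : Set (Fin (d+1) → ℝ) :=
  {x | (∑ j, x j ^ 2) = 1 ∧ (∑ j : Fin d, x j.castSucc ^ 2) ≤ cγ ^ 2}

/-- Reduced setup: the hypothesis class `H = S^{d-1} × {0} ⊂ ℝ^{d+1}`. -/
def Hset (d : ℕ) : Set (Fin (d+1) → ℝ) :=
  {w | (∑ j, w j ^ 2) = 1 ∧ w (Fin.last d) = 0}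

/-- `γ_i = 2^{i-1} n^{-1/2}`. -/
def γlo (n i : ℕ) : ℝ := 2 ^ (i - 1) / Real.sqrt n

/-- `γ_{i+1} = 2^i n^{-1/2}`. -/
def γhi (n i : ℕ) : ℝ := 2 ^ i / Real.sqrt n

/-- `ℓ_{j+1} = 2^j n^{-1}`. -/
def ellhi (n j : ℕ) : ℝ := 2 ^ j / n

/-- The interval `L_j`: `L_0 = [0, n⁻¹]`, and `L_j = (2^{j-1}/n, 2^j/n]` for `j ≥ 1`. -/
def Lset (n j : ℕ) : Set ℝ :=
  if j = 0 then Set.Icc 0 (n : ℝ)⁻¹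
  else Set.Ioc ((2 : ℝ) ^ (j - 1) / n) ((2 : ℝ) ^ j / n)

/-- Margin loss of `h ∈ ℝ^k` under the pushforward distribution `A·D`. -/
def kLossD {k m : ℕ} (D : Measure ((Fin m → ℝ) × ℝ)) (γ : ℝ) (h : Fin k → ℝ)
    (A : Fin k → Fin m → ℝ) : ℝ :=
  (D {q | q.2 * (∑ r, h r * ∑ s, A r s * q.1 s) ≤ γ}).toReal

/-- Empirical margin loss of `h ∈ ℝ^k` on the transformed training set `A·S`. -/
def kLossS {k m n : ℕ} (S : Fin n → (Fin m → ℝ) × ℝ) (γ : ℝ) (h : Fin k → ℝ)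
    (A : Fin k → Fin m → ℝ) : ℝ :=
  (Nat.card {i : Fin n // (S i).2 * (∑ r, h r * ∑ s, A r s * (S i).1 s) ≤ γ} : ℝ) / n

/-- Specification of the function `φ` from the paper, for margin parameter `γi`:
on `[-cγ, 0]` it equals the probability (over the randomized rounding) that the rounded
margin exceeds `γi/2` given original margin `α`; on `(0, γi]` it interpolates linearly to
`0`; on `(γi, cγ]` it is `0`. -/
def phiSpec (d k : ℕ) (cγ γi : ℝ) (φ : ℝ → ℝ) : Prop :=
  (∀ (w x : Fin (d+1) → ℝ) (y : ℝ), w ∈ Hset d → x ∈ Xset d cγ →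
      (y = 1 ∨ y = -1) → y * dotp w x ≤ 0 →
      φ (y * dotp w x) =
        (roundMeasure k (d+1)
          {p | γi / 2 < y * ∑ r, hRound p.1 p.2 w r * ∑ s, p.1 r s * x s}).toReal) ∧
  (∀ α : ℝ, 0 < α → α ≤ γi → φ α = ((γi - α) / γi) * φ 0) ∧
  (∀ α : ℝ, γi < α → α ≤ cγ → φ α = 0)

/-- Specification of the function `ρ` from the paper, for margin parameter `γi`. -/
def rhoSpec (d k : ℕ) (cγ γi : ℝ) (ρ : ℝ → ℝ) : Prop :=
  (∀ (w x : Fin (d+1) → ℝ) (y : ℝ), w ∈ Hset d → x ∈ Xset d cγ →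
      (y = 1 ∨ y = -1) → γi < y * dotp w x →
      ρ (y * dotp w x) =
        (roundMeasure k (d+1)
          {p | y * ∑ r, hRound p.1 p.2 w r * ∑ s, p.1 r s * x s ≤ γi / 2}).toReal) ∧
  (∀ α : ℝ, 0 < α → α ≤ γi →
      ∀ (w x : Fin (d+1) → ℝ) (y : ℝ), w ∈ Hset d → x ∈ Xset d cγ →
      (y = 1 ∨ y = -1) → y * dotp w x = γi →
      ρ α = (α / γi) *
        (roundMeasure k (d+1)
          {p | y * ∑ r, hRound p.1 p.2 w r * ∑ s, p.1 r s * x s ≤ γi / 2}).toReal) ∧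
  (∀ α : ℝ, -cγ ≤ α → α ≤ 0 → ρ α = 0)

/-! For unit vectors with `w ⬝ᵥ x = α`, the pair `(A w, A x)` has the law of
`(g, α g + √(1 - α²) v)` with `g` and `v` independent `N(0, 1/k)` vectors. Let `h` be the rounding
of `g`, so that `|h - g| ≤ 1/10` and `|h| ≥ 1/20` always. Given `g` and the rounding variables, the
event `θ < h ⬝ᵥ A x` says that a centred Gaussian of variance `1/k` exceeds the threshold
`(θ - α h ⬝ᵥ g) / (√(1 - α²) |h|)`. For `α` and `θ` near `0` this threshold grows with `α` at rate
at most `1/8`, since `h ⬝ᵥ g` can only be slightly negative, and if `|g|² ≥ 1/25` it decreases at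
rate at least `1/8`. Hence a larger margin can only hurt when `|g|² ≤ 1/25`, an event whose
probability is at most `e^{-k/50} 3^{-k}` by a Chernoff bound. On the event `1/25 < |g|² < 4`, of
probability at least `1/3`, the thresholds stay in `[-1/5, 1/5]`, where the Gaussian density is at
least `e^{-k/50}` times its maximum, so the gain there outweighs the loss. -/

open Set
open scoped Matrix ENNReal NNReal

section DotProduct

variable {ι : Type*} [Fintype ι]

@[fun_prop]
lemma measurable_dotProduct {Ω : Type*} [MeasurableSpace Ω] {f g : Ω → ι → ℝ}
    (hf : Measurable f) (hg : Measurable g) : Measurable fun ω => f ω ⬝ᵥ g ω := by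
  unfold dotProduct
  fun_prop

lemma dotProduct_self_nonneg (h : ι → ℝ) : 0 ≤ h ⬝ᵥ h :=
  Finset.sum_nonneg fun i _ => mul_self_nonneg (h i)

lemma abs_dotProduct_le_sqrt_mul_sqrt (h g : ι → ℝ) : |h ⬝ᵥ g| ≤ √(h ⬝ᵥ h) * √(g ⬝ᵥ g) := by
  rw [← Real.sqrt_mul (dotProduct_self_nonneg h)]
  refine Real.abs_le_sqrt ?_
  simpa only [dotProduct, ← sq] using Finset.sum_mul_sq_le_sq_mul_sq Finset.univ h g

lemma le_dotProduct_of_sub_dotProduct_self_le {h g : ι → ℝ} {δ : ℝ}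
    (hδ : (h - g) ⬝ᵥ (h - g) ≤ δ) :
    (h ⬝ᵥ h + g ⬝ᵥ g - δ) / 2 ≤ h ⬝ᵥ g := by
  rw [sub_dotProduct, dotProduct_sub, dotProduct_sub, dotProduct_comm g h] at hδ
  linarith

lemma exists_eq_smul_add_sqrt_smul {w x : ι → ℝ} {α : ℝ} (hw : w ⬝ᵥ w = 1) (hx : x ⬝ᵥ x = 1)
    (hwx : w ⬝ᵥ x = α) (hα : α ^ 2 < 1) :
    ∃ u, u ⬝ᵥ u = 1 ∧ w ⬝ᵥ u = 0 ∧ x = α • w + √(1 - α ^ 2) • u := by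
  have hq_pos : 0 < √(1 - α ^ 2) := Real.sqrt_pos.2 (by linarith)
  have hq_sq : √(1 - α ^ 2) ^ 2 = 1 - α ^ 2 := Real.sq_sqrt (by linarith)
  refine ⟨(√(1 - α ^ 2))⁻¹ • (x - α • w), ?_, ?_, ?_⟩
  · simp only [smul_dotProduct, dotProduct_smul, sub_dotProduct, dotProduct_sub, hw, hx,
      dotProduct_comm x w, hwx, smul_eq_mul]
    field_simp
    linarith
  · simp only [dotProduct_smul, dotProduct_sub, hw, hwx, smul_eq_mul, mul_one]
    rw [sub_self, mul_zero]
  · rw [smul_inv_smul₀ hq_pos.ne', add_sub_cancel]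

end DotProduct

/-- The law of a vector of i.i.d. centred Gaussian entries of variance `v`. -/
abbrev gaussianVec (ι : Type*) [Fintype ι] (v : ℝ≥0) : Measure (ι → ℝ) :=
  Measure.pi fun _ => gaussianReal 0 v

section GaussianVectors

variable {ι κ : Type*} [Fintype ι] [Fintype κ] {v : ℝ≥0} {w u : ι → ℝ}

lemma iIndepFun_eval_gaussianVec :
    iIndepFun (fun (i : ι) (a : ι → ℝ) => a i) (gaussianVec ι v) :=
  iIndepFun_pi (X := fun _ => id) fun _ => aemeasurable_id

lemma hasLaw_eval_gaussianVec (i : ι) :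
    HasLaw (fun a : ι → ℝ => a i) (gaussianReal 0 v) (gaussianVec ι v) :=
  (measurePreserving_eval (fun _ : ι => gaussianReal 0 v) i).hasLaw

lemma hasGaussianLaw_dotProduct_prod (w u : ι → ℝ) :
    HasGaussianLaw (fun a => (a ⬝ᵥ w, a ⬝ᵥ u)) (gaussianVec ι v) := by
  have hid : HasGaussianLaw (fun a : ι → ℝ => a) (gaussianVec ι v) :=
    iIndepFun_eval_gaussianVec.hasGaussianLaw fun i => (hasLaw_eval_gaussianVec i).hasGaussianLaw
  exact hid.map_fun (((dotProductBilin ℝ ℝ).flip w).prod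
    ((dotProductBilin ℝ ℝ).flip u)).toContinuousLinearMap

lemma covariance_dotProduct_gaussianVec (w u : ι → ℝ) :
    cov[fun a => a ⬝ᵥ w, fun a => a ⬝ᵥ u; gaussianVec ι v] = v * (w ⬝ᵥ u) := by
  classical
  have hL2 (i : ι) : MemLp (fun a : ι → ℝ => a i) 2 (gaussianVec ι v) :=
    (hasLaw_eval_gaussianVec i).hasGaussianLaw.memLp_two
  have hcov (i j : ι) : cov[fun a : ι → ℝ => a i, fun a => a j; gaussianVec ι v] =
      if i = j then (v : ℝ) else 0 := by
    obtain rfl | hij := eq_or_ne i j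
    · rw [if_pos rfl]
      rw [covariance_self (hL2 i).aemeasurable, (hasLaw_eval_gaussianVec i).variance_eq,
        variance_id_gaussianReal]
    · rw [if_neg hij]
      exact (iIndepFun_eval_gaussianVec.indepFun hij).covariance_eq_zero (hL2 i) (hL2 j)
  simp only [dotProduct]
  rw [covariance_fun_sum_fun_sum (fun i => (hL2 i).mul_const (w i))
    fun j => (hL2 j).mul_const (u j)]
  simp only [covariance_mul_const_left, covariance_mul_const_right, hcov, ite_mul, zero_mul,
    Finset.sum_ite_eq, Finset.mem_univ, if_true, Finset.mul_sum, mul_assoc]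

lemma measurePreserving_dotProduct_gaussianVec (hw : w ⬝ᵥ w = 1) :
    MeasurePreserving (fun a => a ⬝ᵥ w) (gaussianVec ι v) (gaussianReal 0 v) := by
  have hgauss := (hasGaussianLaw_dotProduct_prod (v := v) w w).fst
  refine ⟨by fun_prop, ?_⟩
  have hmean : ∫ a, a ⬝ᵥ w ∂(gaussianVec ι v) = 0 := by
    simp only [dotProduct]
    rw [integral_finsetSum _ fun i _ =>
      (hasLaw_eval_gaussianVec i).hasGaussianLaw.integrable.mul_const _]
    simp only [integral_mul_const, (hasLaw_eval_gaussianVec _).integral_eq,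
      integral_id_gaussianReal, zero_mul, Finset.sum_const_zero]
  rw [hgauss.map_eq_gaussianReal, hmean, ← covariance_self hgauss.aemeasurable,
    covariance_dotProduct_gaussianVec, hw, mul_one, Real.toNNReal_coe]

lemma measurePreserving_dotProduct_prod (hw : w ⬝ᵥ w = 1) (hu : u ⬝ᵥ u = 1) (hwu : w ⬝ᵥ u = 0) :
    MeasurePreserving (fun a => (a ⬝ᵥ w, a ⬝ᵥ u)) (gaussianVec ι v)
      ((gaussianReal 0 v).prod (gaussianReal 0 v)) := by
  have hindep : (fun a => a ⬝ᵥ w) ⟂ᵢ[gaussianVec ι v] (fun a => a ⬝ᵥ u) :=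
    (hasGaussianLaw_dotProduct_prod w u).indepFun_of_covariance_eq_zero <| by
      rw [covariance_dotProduct_gaussianVec, hwu, mul_zero]
  refine ⟨by fun_prop, ?_⟩
  rw [(indepFun_iff_map_prod_eq_prod_map_map (by fun_prop) (by fun_prop)).1 hindep,
    (measurePreserving_dotProduct_gaussianVec hw).map_eq,
    (measurePreserving_dotProduct_gaussianVec hu).map_eq]

lemma measurePreserving_mulVec_prod (hw : w ⬝ᵥ w = 1) (hu : u ⬝ᵥ u = 1) (hwu : w ⬝ᵥ u = 0) :
    MeasurePreserving (fun A : κ → ι → ℝ => (.of A *ᵥ w, .of A *ᵥ u))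
      (Measure.pi fun _ => gaussianVec ι v) ((gaussianVec κ v).prod (gaussianVec κ v)) :=
  (measurePreserving_arrowProdEquivProdArrow ℝ ℝ κ _ _).comp <|
    measurePreserving_pi _ _ fun _ => measurePreserving_dotProduct_prod hw hu hwu

end GaussianVectors

section GaussianTails

variable {μ r s t : ℝ} {v : ℝ≥0}

lemma gaussianPDF_le_of_abs_le (v : ℝ≥0) (h : |s - μ| ≤ |t - μ|) :
    gaussianPDF μ v t ≤ gaussianPDF μ v s := by
  unfold gaussianPDF gaussianPDFReal
  have hsq : (s - μ) ^ 2 ≤ (t - μ) ^ 2 := sq_le_sq.2 h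
  gcongr

lemma gaussianPDF_add_eq_mul (μ r : ℝ) (v : ℝ≥0) :
    gaussianPDF μ v (μ + r) = .ofReal (Real.exp (-r ^ 2 / (2 * v))) * gaussianPDF μ v μ := by
  rw [gaussianPDF, gaussianPDF, ← ENNReal.ofReal_mul (Real.exp_nonneg _), gaussianPDFReal,
    gaussianPDFReal]
  simp [mul_comm]

lemma gaussianReal_Ioi_le_add (hv : v ≠ 0) :
    gaussianReal μ v (Ioi s) ≤
      gaussianReal μ v (Ioi t) + gaussianPDF μ v μ * .ofReal (t - s) :=
  calc gaussianReal μ v (Ioi s)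
    _ ≤ gaussianReal μ v (Ioi t ∪ Ioc s t) :=
      measure_mono fun x hx => (lt_or_ge t x).imp id fun hxt => ⟨hx, hxt⟩
    _ ≤ gaussianReal μ v (Ioi t) + gaussianReal μ v (Ioc s t) := measure_union_le _ _
    _ ≤ gaussianReal μ v (Ioi t) + gaussianPDF μ v μ * .ofReal (t - s) := by
      gcongr
      rw [gaussianReal_apply μ hv, ← Real.volume_Ioc, ← setLIntegral_const]
      exact lintegral_mono fun x => gaussianPDF_le_of_abs_le v (by simp)

lemma gaussianReal_Ioi_add_le (hv : v ≠ 0) (hst : s ≤ t) (hs : |s - μ| ≤ r) (ht : |t - μ| ≤ r) :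
    gaussianReal μ v (Ioi t) + gaussianPDF μ v (μ + r) * .ofReal (t - s) ≤
      gaussianReal μ v (Ioi s) := by
  rw [← Ioc_union_Ioi_eq_Ioi hst, measure_union Ioc_disjoint_Ioi_same measurableSet_Ioi, add_comm]
  gcongr
  rw [gaussianReal_apply μ hv, ← Real.volume_Ioc, ← setLIntegral_const]
  refine setLIntegral_mono (measurable_gaussianPDF μ v) fun x hx => gaussianPDF_le_of_abs_le v ?_
  rw [add_sub_cancel_left]
  refine (abs_le.2 ⟨?_, ?_⟩).trans (le_abs_self r) <;>
    linarith [(abs_le.1 hs).1, (abs_le.1 ht).2, hx.1, hx.2]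

end GaussianTails

section ChiSquare

variable {ι : Type*} [Fintype ι] {v : ℝ≥0}

lemma integral_exp_mul_sq_gaussianReal (hv : v ≠ 0) {t : ℝ} (ht : 2 * t * v < 1) :
    ∫ x, Real.exp (t * x ^ 2) ∂gaussianReal 0 v = (√(1 - 2 * t * v))⁻¹ := by
  have : (0 : ℝ) < v := by positivity
  have : 0 < 1 - 2 * t * v := by linarith
  have hintegrand (x : ℝ) : gaussianPDFReal 0 v x • Real.exp (t * x ^ 2) =
      (√(2 * Real.pi * v))⁻¹ * Real.exp (-((1 - 2 * t * v) / (2 * v)) * x ^ 2) := by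
    rw [gaussianPDFReal, smul_eq_mul, mul_assoc, ← Real.exp_add]
    congr 2
    field_simp
    ring
  simp only [integral_gaussianReal_eq_integral_smul hv, hintegrand]
  rw [integral_const_mul, integral_gaussian, ← Real.sqrt_inv, ← Real.sqrt_inv,
    ← Real.sqrt_mul (by positivity)]
  congr 1
  field_simp

lemma mgf_dotProduct_self_gaussianVec (hv : v ≠ 0) {t : ℝ} (ht : 2 * t * v < 1) :
    mgf (fun g => g ⬝ᵥ g) (gaussianVec ι v) t = (√(1 - 2 * t * v))⁻¹ ^ Fintype.card ι := by
  simp only [mgf, dotProduct, Finset.mul_sum, Real.exp_sum, ← sq]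
  rw [integral_fintype_prod_eq_pow (fun x : ℝ => Real.exp (t * x ^ 2)),
    integral_exp_mul_sq_gaussianReal hv ht]

lemma measureReal_dotProduct_self_le_le (hv : v ≠ 0) {c : ℝ} (hc₀ : 0 < c) (hc₁ : c ≤ 1) :
    (gaussianVec ι v).real {g | g ⬝ᵥ g ≤ c * (Fintype.card ι * v)} ≤
      (√c * Real.exp ((1 - c) / 2)) ^ Fintype.card ι := by
  have : (0 : ℝ) < v := by positivity
  set t : ℝ := -(c⁻¹ - 1) / (2 * v) with ht
  have hscale : 1 - 2 * t * v = c⁻¹ := by rw [ht]; field_simp; ring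
  have ht_nonpos : t ≤ 0 := by
    have := (one_le_inv₀ hc₀).2 hc₁
    exact div_nonpos_of_nonpos_of_nonneg (by linarith) (by positivity)
  have hmgf := mgf_dotProduct_self_gaussianVec (ι := ι) hv (t := t) (by linarith [inv_pos.2 hc₀])
  rw [hscale, Real.sqrt_inv, inv_inv] at hmgf
  have hint : Integrable (fun g => Real.exp (t * (g ⬝ᵥ g))) (gaussianVec ι v) :=
    .of_integral_ne_zero (hmgf.trans_ne (by positivity))
  refine (measure_le_le_exp_mul_mgf _ ht_nonpos hint).trans_eq ?_
  rw [hmgf, mul_pow, mul_comm, ← Real.exp_nat_mul, ht]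
  congr 2
  field_simp

lemma measureReal_le_dotProduct_self_le {ε : ℝ} (hε : 0 < ε) :
    (gaussianVec ι v).real {g | ε ≤ g ⬝ᵥ g} ≤ Fintype.card ι * v / ε := by
  have hlaw (i : ι) := hasLaw_eval_gaussianVec (v := v) i
  have hint (i : ι) : Integrable (fun g : ι → ℝ => g i ^ 2) (gaussianVec ι v) :=
    (hlaw i).hasGaussianLaw.memLp_two.integrable_sq
  have hvar (i : ι) : ∫ g, g i ^ 2 ∂gaussianVec ι v = v := by
    rw [← variance_of_integral_eq_zero (hlaw i).aemeasurable
      ((hlaw i).integral_eq.trans integral_id_gaussianReal), (hlaw i).variance_eq,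
      variance_id_gaussianReal]
  have hmean : ∫ g, g ⬝ᵥ g ∂gaussianVec ι v = Fintype.card ι * v := by
    simp only [dotProduct, ← sq, integral_finsetSum _ fun i _ => hint i, hvar, Finset.sum_const,
      Finset.card_univ, nsmul_eq_mul]
  rw [le_div_iff₀' hε, ← hmean]
  refine mul_meas_ge_le_integral_of_nonneg (ae_of_all _ dotProduct_self_nonneg) ?_ ε
  simp only [dotProduct, ← sq]
  exact integrable_finsetSum _ fun i _ => hint i

end ChiSquare

section Rounding

variable {k : ℕ}

/-- The randomized rounding of a vector `g` driven by the uniform variables `t`; thus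
`h_{A,t}(w)` is `gridRound k (Aw) t`. -/
def gridRound (k : ℕ) (g t : Fin k → ℝ) : Fin k → ℝ := fun i =>
  if t i ≤ roundProb k (g i) then roundDown k (g i) else roundDown k (g i) + gridStep k

lemma hRound_eq_gridRound {m : ℕ} (A : Fin k → Fin m → ℝ) (t : Fin k → ℝ) (w : Fin m → ℝ) :
    hRound A t w = gridRound k (.of A *ᵥ w) t := rfl

lemma gridStep_pos (hk : 0 < k) : 0 < gridStep k := by
  unfold gridStep
  positivity

lemma mul_gridStep_sq (hk : 0 < k) : k * gridStep k ^ 2 = 1 / 100 := by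
  have hk_pos : (0 : ℝ) < k := by exact_mod_cast hk
  rw [gridStep, inv_pow, mul_pow, Real.sq_sqrt hk_pos.le]
  field_simp
  norm_num

@[fun_prop]
lemma measurable_roundDown (k : ℕ) : Measurable (roundDown k) := by
  unfold roundDown
  fun_prop

@[fun_prop]
lemma measurable_roundProb (k : ℕ) : Measurable (roundProb k) := by
  unfold roundProb
  fun_prop

lemma measurable_gridRound (k : ℕ) :
    Measurable fun p : (Fin k → ℝ) × (Fin k → ℝ) => gridRound k p.1 p.2 :=
  measurable_pi_lambda _ fun i =>
    .ite (measurableSet_le (by fun_prop) (by fun_prop)) (by fun_prop) (by fun_prop)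

lemma abs_gridRound_sub_le (hk : 0 < k) (g t : Fin k → ℝ) (i : Fin k) :
    |gridRound k g t i - g i| ≤ gridStep k := by
  have hstep := gridStep_pos hk
  have hle := Int.floor_le ((g i - gridStep k / 2) / gridStep k)
  have hlt := Int.lt_floor_add_one ((g i - gridStep k / 2) / gridStep k)
  rw [le_div_iff₀ hstep] at hle
  rw [div_lt_iff₀ hstep] at hlt
  unfold gridRound roundDown
  rw [abs_le]
  split_ifs <;> constructor <;> linarith

lemma gridStep_half_le_abs_gridRound (hk : 0 < k) (g t : Fin k → ℝ) (i : Fin k) :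
    gridStep k / 2 ≤ |gridRound k g t i| := by
  have hstep := gridStep_pos hk
  obtain ⟨z, hz⟩ : ∃ z : ℤ, gridRound k g t i = (1 / 2 + z) * gridStep k := by
    unfold gridRound roundDown
    split_ifs
    · exact ⟨_, by ring⟩
    · exact ⟨⌊(g i - gridStep k / 2) / gridStep k⌋ + 1, by push_cast; ring⟩
  have hhalf : (1 : ℝ) / 2 ≤ |1 / 2 + (z : ℝ)| := by
    obtain hz | hz := le_or_gt 0 z
    · exact (le_add_of_nonneg_right (by exact_mod_cast hz)).trans (le_abs_self _)
    · have : (z : ℝ) ≤ -1 := by exact_mod_cast Int.le_sub_one_of_lt hz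
      exact le_trans (by linarith) (neg_le_abs _)
  rw [hz, abs_mul, abs_of_pos hstep]
  linarith [mul_le_mul_of_nonneg_right hhalf hstep.le]

lemma gridRound_sub_dotProduct_self_le (hk : 0 < k) (g t : Fin k → ℝ) :
    (gridRound k g t - g) ⬝ᵥ (gridRound k g t - g) ≤ 1 / 100 :=
  calc (gridRound k g t - g) ⬝ᵥ (gridRound k g t - g)
    _ ≤ ∑ _i : Fin k, gridStep k ^ 2 := Finset.sum_le_sum fun i _ => by
      rw [← sq, Pi.sub_apply, ← sq_abs]
      gcongr
      exact abs_gridRound_sub_le hk g t i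
    _ = 1 / 100 := by simp [mul_gridStep_sq hk]

lemma le_gridRound_dotProduct_self (hk : 0 < k) (g t : Fin k → ℝ) :
    1 / 400 ≤ gridRound k g t ⬝ᵥ gridRound k g t :=
  calc (1 / 400 : ℝ)
    _ = ∑ _i : Fin k, (gridStep k / 2) ^ 2 := by
      rw [Finset.sum_const, Finset.card_univ, Fintype.card_fin, nsmul_eq_mul, div_pow]
      linarith [mul_gridStep_sq hk]
    _ ≤ gridRound k g t ⬝ᵥ gridRound k g t := Finset.sum_le_sum fun i _ => by
      rw [← sq, ← sq_abs (gridRound k g t i)]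
      have := gridStep_pos hk
      gcongr
      exact gridStep_half_le_abs_gridRound hk g t i

end Rounding

section Threshold

variable {ι : Type*} [Fintype ι] {h g : ι → ℝ} {θ α α₁ α₂ : ℝ}

/-- If `v` has i.i.d. `N(0, σ²)` entries, then `h ⬝ᵥ v / √(h ⬝ᵥ h)` is `N(0, σ²)`, and the event
`θ < h ⬝ᵥ (α g + √(1 - α²) v)` says that this variable exceeds `threshold h g θ α`. -/
def threshold (h g : ι → ℝ) (θ α : ℝ) : ℝ := (θ - α * (h ⬝ᵥ g)) / (√(1 - α ^ 2) * √(h ⬝ᵥ h))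

lemma hasDerivAt_threshold (h g : ι → ℝ) (θ : ℝ) (hα : α ^ 2 < 1) :
    HasDerivAt (threshold h g θ) ((θ * α - h ⬝ᵥ g) / (√(1 - α ^ 2) ^ 3 * √(h ⬝ᵥ h))) α := by
  have hpos : 0 < 1 - α ^ 2 := by linarith
  have hnum : HasDerivAt (fun a => θ - a * (h ⬝ᵥ g)) (-(h ⬝ᵥ g)) α := by
    simpa using ((hasDerivAt_id α).mul_const (h ⬝ᵥ g)).const_sub θ
  have hsqrt : HasDerivAt (fun a : ℝ => √(1 - a ^ 2)) (-(2 * α) / (2 * √(1 - α ^ 2))) α := by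
    simpa using ((hasDerivAt_pow 2 α).const_sub 1).sqrt hpos.ne'
  have hq_pos : 0 < √(1 - α ^ 2) := Real.sqrt_pos.2 hpos
  have hq_sq : √(1 - α ^ 2) ^ 2 = 1 - α ^ 2 := Real.sq_sqrt hpos.le
  have hquot := (hnum.div hsqrt hq_pos.ne').div_const √(h ⬝ᵥ h)
  simp only [Pi.div_apply, div_div] at hquot
  have hnumerator : -(h ⬝ᵥ g) * √(1 - α ^ 2) -
      (θ - α * (h ⬝ᵥ g)) * (-(2 * α) / (2 * √(1 - α ^ 2))) =
      (θ * α - h ⬝ᵥ g) / √(1 - α ^ 2) := by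
    field_simp
    linear_combination -(h ⬝ᵥ g) * hq_sq
  refine hquot.congr_deriv ?_
  rw [hnumerator, div_div]
  congr 1
  ring

lemma sq_lt_one_of_mem_Icc {r α : ℝ} (hr : r < 1) (hα : α ∈ Icc (-r) r) : α ^ 2 < 1 :=
  (sq_lt_one_iff_abs_lt_one α).2 ((abs_le.2 hα).trans_lt hr)

lemma le_sqrt_one_sub_sq (hα : |α| ≤ 1 / 200) : 49 / 50 ≤ √(1 - α ^ 2) := by
  have hsq : α ^ 2 ≤ (1 / 200) ^ 2 := sq_le_sq' (abs_le.1 hα).1 (abs_le.1 hα).2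
  exact Real.le_sqrt_of_sq_le (by linarith)

lemma deriv_threshold_le (hθ : |θ| ≤ 1 / 200) (hα : |α| ≤ 1 / 200)
    (hsub : (h - g) ⬝ᵥ (h - g) ≤ 1 / 100) (hh : 1 / 400 ≤ h ⬝ᵥ h) :
    deriv (threshold h g θ) α ≤ 1 / 8 := by
  have hs : 1 / 20 ≤ √(h ⬝ᵥ h) := Real.le_sqrt_of_sq_le (by linarith)
  have hq_pow : 4 / 5 ≤ √(1 - α ^ 2) ^ 3 :=
    le_trans (by norm_num) (pow_le_pow_left₀ (by norm_num) (le_sqrt_one_sub_sq hα) 3)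
  have hcorr := le_dotProduct_of_sub_dotProduct_self_le hsub
  have hg := dotProduct_self_nonneg g
  have hα_sq : α ^ 2 < 1 := (sq_lt_one_iff_abs_lt_one α).2 (by linarith)
  have hθα : |θ * α| ≤ 1 / 200 * (1 / 200) := by rw [abs_mul]; gcongr
  have hden : 0 < √(1 - α ^ 2) ^ 3 * √(h ⬝ᵥ h) :=
    mul_pos (pow_pos (Real.sqrt_pos.2 (by linarith)) 3) (Real.sqrt_pos.2 (by linarith))
  rw [(hasDerivAt_threshold h g θ hα_sq).deriv, div_le_iff₀ hden]
  calc θ * α - h ⬝ᵥ g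
    _ ≤ 1 / 8 * (4 / 5 * √(h ⬝ᵥ h)) := by linarith [(abs_le.1 hθα).2]
    _ ≤ 1 / 8 * (√(1 - α ^ 2) ^ 3 * √(h ⬝ᵥ h)) := by gcongr

lemma deriv_threshold_le_neg (hθ : |θ| ≤ 1 / 200) (hα : |α| ≤ 1 / 200)
    (hsub : (h - g) ⬝ᵥ (h - g) ≤ 1 / 100) (hh : 1 / 400 ≤ h ⬝ᵥ h) (hg : 1 / 25 ≤ g ⬝ᵥ g) :
    deriv (threshold h g θ) α ≤ -(1 / 8) := by
  have hs_sq : √(h ⬝ᵥ h) ^ 2 = h ⬝ᵥ h := Real.sq_sqrt (by linarith)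
  have hq_pow : √(1 - α ^ 2) ^ 3 ≤ 1 :=
    pow_le_one₀ (Real.sqrt_nonneg _) (Real.sqrt_le_one.2 (by linarith [sq_nonneg α]))
  have hcorr := le_dotProduct_of_sub_dotProduct_self_le hsub
  have hα_sq : α ^ 2 < 1 := (sq_lt_one_iff_abs_lt_one α).2 (by linarith)
  have hθα : |θ * α| ≤ 1 / 200 * (1 / 200) := by rw [abs_mul]; gcongr
  have hden : 0 < √(1 - α ^ 2) ^ 3 * √(h ⬝ᵥ h) :=
    mul_pos (pow_pos (Real.sqrt_pos.2 (by linarith)) 3) (Real.sqrt_pos.2 (by linarith))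
  rw [(hasDerivAt_threshold h g θ hα_sq).deriv, div_le_iff₀ hden]
  calc θ * α - h ⬝ᵥ g
    _ ≤ -(1 / 8) * (1 * √(h ⬝ᵥ h)) := by
      linarith [(abs_le.1 hθα).2, hs_sq, sq_nonneg (√(h ⬝ᵥ h) - 1 / 8)]
    _ ≤ -(1 / 8) * (√(1 - α ^ 2) ^ 3 * √(h ⬝ᵥ h)) := by
      rw [neg_mul, neg_mul, neg_le_neg_iff]
      gcongr

lemma threshold_sub_le_mul_sub {r C : ℝ} (hr : r < 1)
    (hderiv : ∀ α, |α| ≤ r → deriv (threshold h g θ) α ≤ C)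
    (hα₁ : α₁ ∈ Icc (-r) r) (hα₂ : α₂ ∈ Icc (-r) r) (h₁₂ : α₁ ≤ α₂) :
    threshold h g θ α₂ - threshold h g θ α₁ ≤ C * (α₂ - α₁) := by
  have hdiff (α) (hα : α ∈ Icc (-r) r) : DifferentiableAt ℝ (threshold h g θ) α :=
    (hasDerivAt_threshold h g θ (sq_lt_one_of_mem_Icc hr hα)).differentiableAt
  exact (convex_Icc (-r) r).image_sub_le_mul_sub_of_deriv_le
    (fun α hα => (hdiff α hα).continuousAt.continuousWithinAt)
    (fun α hα => (hdiff α (interior_subset hα)).differentiableWithinAt)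
    (fun α hα => hderiv α (abs_le.2 (mem_Icc.1 (interior_subset hα)))) α₁ hα₁ α₂ hα₂ h₁₂

lemma threshold_sub_le (hθ : |θ| ≤ 1 / 200) (hsub : (h - g) ⬝ᵥ (h - g) ≤ 1 / 100)
    (hh : 1 / 400 ≤ h ⬝ᵥ h) (hα₁ : α₁ ∈ Icc (-(1 / 200)) (1 / 200))
    (hα₂ : α₂ ∈ Icc (-(1 / 200)) (1 / 200)) (h₁₂ : α₁ ≤ α₂) :
    threshold h g θ α₂ - threshold h g θ α₁ ≤ 1 / 8 * (α₂ - α₁) :=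
  threshold_sub_le_mul_sub (by norm_num) (fun _ hα => deriv_threshold_le hθ hα hsub hh)
    hα₁ hα₂ h₁₂

lemma le_threshold_sub (hθ : |θ| ≤ 1 / 200) (hsub : (h - g) ⬝ᵥ (h - g) ≤ 1 / 100)
    (hh : 1 / 400 ≤ h ⬝ᵥ h) (hg : 1 / 25 ≤ g ⬝ᵥ g) (hα₁ : α₁ ∈ Icc (-(1 / 200)) (1 / 200))
    (hα₂ : α₂ ∈ Icc (-(1 / 200)) (1 / 200)) (h₁₂ : α₁ ≤ α₂) :
    1 / 8 * (α₂ - α₁) ≤ threshold h g θ α₁ - threshold h g θ α₂ := by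
  linarith [threshold_sub_le_mul_sub (by norm_num)
    (fun _ hα => deriv_threshold_le_neg hθ hα hsub hh hg) hα₁ hα₂ h₁₂]

lemma abs_threshold_le (hθ : |θ| ≤ 1 / 200) (hα : |α| ≤ 1 / 200) (hh : 1 / 400 ≤ h ⬝ᵥ h)
    (hg : g ⬝ᵥ g ≤ 4) : |threshold h g θ α| ≤ 1 / 5 := by
  have hs : 1 / 20 ≤ √(h ⬝ᵥ h) := Real.le_sqrt_of_sq_le (by linarith)
  have hq := le_sqrt_one_sub_sq hα
  have hden : 0 < √(1 - α ^ 2) * √(h ⬝ᵥ h) := by positivity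
  have hg_sqrt : √(g ⬝ᵥ g) ≤ 2 := Real.sqrt_le_iff.2 ⟨by norm_num, by linarith⟩
  have hcorr := abs_dotProduct_le_sqrt_mul_sqrt h g
  rw [threshold, abs_div, abs_of_pos hden, div_le_iff₀ hden]
  calc |θ - α * (h ⬝ᵥ g)|
    _ ≤ |θ| + |α| * |h ⬝ᵥ g| := (abs_sub _ _).trans_eq (by rw [abs_mul])
    _ ≤ 1 / 200 + 1 / 200 * (√(h ⬝ᵥ h) * 2) := by gcongr; exact hcorr.trans (by gcongr)
    _ ≤ 1 / 5 * (49 / 50 * √(h ⬝ᵥ h)) := by linarith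
    _ ≤ 1 / 5 * (√(1 - α ^ 2) * √(h ⬝ᵥ h)) := by gcongr

end Threshold

lemma lintegral_le_lintegral_of_add_indicator_le {Ω : Type*} [MeasurableSpace Ω] {μ : Measure Ω}
    {f₁ f₂ : Ω → ℝ≥0∞} {gain loss : Set Ω} {a b : ℝ≥0∞} (hgain : MeasurableSet gain)
    (hloss : MeasurableSet loss)
    (hle : ∀ ω, f₁ ω + gain.indicator (fun _ => a) ω ≤ f₂ ω + loss.indicator (fun _ => b) ω)
    (hba : b * μ loss ≤ a * μ gain) (hfin : b * μ loss ≠ ∞) :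
    ∫⁻ ω, f₁ ω ∂μ ≤ ∫⁻ ω, f₂ ω ∂μ := by
  refine ENNReal.le_of_add_le_add_right hfin ?_
  calc ∫⁻ ω, f₁ ω ∂μ + b * μ loss
    _ ≤ ∫⁻ ω, f₁ ω ∂μ + a * μ gain := by gcongr
    _ = ∫⁻ ω, f₁ ω + gain.indicator (fun _ => a) ω ∂μ := by
      rw [lintegral_add_right _ (measurable_const.indicator hgain),
        lintegral_indicator_const hgain]
    _ ≤ ∫⁻ ω, f₂ ω + loss.indicator (fun _ => b) ω ∂μ := lintegral_mono hle
    _ = ∫⁻ ω, f₂ ω ∂μ + b * μ loss := by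
      rw [lintegral_add_right _ (measurable_const.indicator hloss),
        lintegral_indicator_const hloss]

section ThresholdTail

variable {ι : Type*} [Fintype ι] {h g : ι → ℝ} {θ α₁ α₂ : ℝ} {v : ℝ≥0}

lemma gaussianReal_Ioi_threshold_add_indicator_le (hv : v ≠ 0) (hθ : |θ| ≤ 1 / 200)
    (hsub : (h - g) ⬝ᵥ (h - g) ≤ 1 / 100) (hh : 1 / 400 ≤ h ⬝ᵥ h)
    (hα₁ : α₁ ∈ Icc (-(1 / 200)) (1 / 200)) (hα₂ : α₂ ∈ Icc (-(1 / 200)) (1 / 200))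
    (h₁₂ : α₁ ≤ α₂) :
    gaussianReal 0 v (Ioi (threshold h g θ α₁)) +
        {g : ι → ℝ | 1 / 25 < g ⬝ᵥ g ∧ g ⬝ᵥ g < 4}.indicator
          (fun _ => gaussianPDF 0 v (1 / 5) * .ofReal (1 / 8 * (α₂ - α₁))) g ≤
      gaussianReal 0 v (Ioi (threshold h g θ α₂)) +
        {g : ι → ℝ | g ⬝ᵥ g ≤ 1 / 25}.indicator
          (fun _ => gaussianPDF 0 v 0 * .ofReal (1 / 8 * (α₂ - α₁))) g := by
  simp only [indicator_apply, mem_ofPred_eq]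
  obtain hshort | hg := le_or_gt (g ⬝ᵥ g) (1 / 25)
  · rw [if_neg fun hshell => hshell.1.not_ge hshort, if_pos hshort, add_zero]
    refine (gaussianReal_Ioi_le_add (t := threshold h g θ α₂) hv).trans ?_
    gcongr
    exact threshold_sub_le hθ hsub hh hα₁ hα₂ h₁₂
  have hdecrease := le_threshold_sub hθ hsub hh hg.le hα₁ hα₂ h₁₂
  rw [if_neg hg.not_ge, add_zero]
  split_ifs with hshell
  · have habs (α) (hα : α ∈ Icc (-(1 / 200)) (1 / 200)) : |threshold h g θ α - 0| ≤ 1 / 5 :=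
      (sub_zero (threshold h g θ α)).symm ▸ abs_threshold_le hθ (abs_le.2 hα) hh hshell.2.le
    refine le_trans ?_ (gaussianReal_Ioi_add_le hv (by linarith) (habs α₂ hα₂) (habs α₁ hα₁))
    rw [zero_add]
    gcongr
  · rw [add_zero]
    exact measure_mono (Ioi_subset_Ioi (by linarith))

lemma gaussianVec_lt_dotProduct {α : ℝ} (hα : α ^ 2 < 1) (hh : 0 < h ⬝ᵥ h) :
    gaussianVec ι v {x | θ < h ⬝ᵥ (α • g + √(1 - α ^ 2) • x)} =
      gaussianReal 0 v (Ioi (threshold h g θ α)) := by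
  have hq : 0 < √(1 - α ^ 2) := Real.sqrt_pos.2 (by linarith)
  have hn : 0 < √(h ⬝ᵥ h) := Real.sqrt_pos.2 hh
  have hunit : ((√(h ⬝ᵥ h))⁻¹ • h) ⬝ᵥ ((√(h ⬝ᵥ h))⁻¹ • h) = 1 := by
    rw [smul_dotProduct, dotProduct_smul, smul_eq_mul, smul_eq_mul, ← mul_assoc, ← mul_inv,
      Real.mul_self_sqrt hh.le, inv_mul_cancel₀ hh.ne']
  rw [← (measurePreserving_dotProduct_gaussianVec hunit).measure_preimage
    measurableSet_Ioi.nullMeasurableSet]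
  congr 1 with x
  simp only [mem_ofPred_eq, mem_preimage, mem_Ioi, threshold, div_lt_iff₀ (mul_pos hq hn),
    dotProduct_add, dotProduct_smul, smul_eq_mul, dotProduct_comm x h]
  rw [sub_lt_iff_lt_add', show (√(h ⬝ᵥ h))⁻¹ * (h ⬝ᵥ x) * (√(1 - α ^ 2) * √(h ⬝ᵥ h)) =
    √(1 - α ^ 2) * (h ⬝ᵥ x) by field_simp]

end ThresholdTail

section NormalizedGaussianVector

variable {k : ℕ}

lemma measureReal_dotProduct_self_le_inv_25_le (hk : 0 < k) :
    (gaussianVec (Fin k) (k : ℝ≥0)⁻¹).real {g | g ⬝ᵥ g ≤ 1 / 25} ≤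
      Real.exp (-(k / 50)) * (1 / 3) ^ k := by
  have hk_ne : (k : ℝ) ≠ 0 := by positivity
  have hv : (k : ℝ≥0)⁻¹ ≠ 0 := by positivity
  have htail := measureReal_dotProduct_self_le_le (ι := Fin k) hv (c := 1 / 25) (by norm_num)
    (by norm_num)
  have hexp_half : Real.exp (1 / 2) ≤ 5 / 3 := by
    rw [Real.exp_half, Real.sqrt_le_iff]
    exact ⟨by norm_num, by linarith [Real.exp_one_lt_d9]⟩
  have hsqrt : √(1 / 25 : ℝ) = 1 / 5 := by
    rw [Real.sqrt_eq_iff_mul_self_eq (by norm_num) (by norm_num)]; norm_num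
  rw [Fintype.card_fin, NNReal.coe_inv, NNReal.coe_natCast, mul_inv_cancel₀ hk_ne, mul_one] at htail
  calc (gaussianVec (Fin k) (k : ℝ≥0)⁻¹).real {g | g ⬝ᵥ g ≤ 1 / 25}
    _ ≤ (√(1 / 25) * Real.exp ((1 - 1 / 25) / 2)) ^ k := htail
    _ = (Real.exp (-(1 / 50)) * (1 / 5 * Real.exp (1 / 2))) ^ k := by
      rw [hsqrt, mul_left_comm, ← Real.exp_add]
      norm_num
    _ ≤ (Real.exp (-(1 / 50)) * (1 / 3)) ^ k := by gcongr; linarith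
    _ = Real.exp (-(k / 50)) * (1 / 3) ^ k := by
      rw [mul_pow, ← Real.exp_nat_mul]
      ring_nf

lemma one_third_le_measureReal_shell (hk : 0 < k) :
    1 / 3 ≤ (gaussianVec (Fin k) (k : ℝ≥0)⁻¹).real {g | 1 / 25 < g ⬝ᵥ g ∧ g ⬝ᵥ g < 4} := by
  set P := gaussianVec (Fin k) (k : ℝ≥0)⁻¹
  have hk_ne : (k : ℝ) ≠ 0 := by positivity
  have hlong : P.real {g | 4 ≤ g ⬝ᵥ g} ≤ 1 / 4 := by
    refine (measureReal_le_dotProduct_self_le four_pos).trans_eq ?_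
    rw [Fintype.card_fin, NNReal.coe_inv, NNReal.coe_natCast, mul_inv_cancel₀ hk_ne]
  have hshort : P.real {g | g ⬝ᵥ g ≤ 1 / 25} ≤ 1 / 3 :=
    calc P.real {g | g ⬝ᵥ g ≤ 1 / 25}
      _ ≤ Real.exp (-(k / 50)) * (1 / 3) ^ k := measureReal_dotProduct_self_le_inv_25_le hk
      _ ≤ 1 * (1 / 3) ^ 1 := by
        gcongr ?_ * ?_
        · exact Real.exp_le_one_iff.2 (neg_nonpos.2 (by positivity))
        · exact pow_le_pow_of_le_one (by norm_num) (by norm_num) hk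
      _ = 1 / 3 := by norm_num
  have hcover : univ ⊆ {g : Fin k → ℝ | 1 / 25 < g ⬝ᵥ g ∧ g ⬝ᵥ g < 4} ∪
      ({g | g ⬝ᵥ g ≤ 1 / 25} ∪ {g | 4 ≤ g ⬝ᵥ g}) := fun g _ => by
    simp only [mem_union, mem_ofPred_eq]
    grind
  have htotal := (measureReal_mono (μ := P) hcover).trans <|
    (measureReal_union_le _ _).trans <| add_le_add_right (measureReal_union_le _ _) _
  rw [probReal_univ] at htotal
  linarith

lemma measure_dotProduct_self_le_inv_25_le_shell (hk : 0 < k) :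
    gaussianVec (Fin k) (k : ℝ≥0)⁻¹ {g | g ⬝ᵥ g ≤ 1 / 25} ≤ .ofReal (Real.exp (-(k / 50))) *
      gaussianVec (Fin k) (k : ℝ≥0)⁻¹ {g | 1 / 25 < g ⬝ᵥ g ∧ g ⬝ᵥ g < 4} := by
  rw [← ofReal_measureReal, ← ofReal_measureReal, ← ENNReal.ofReal_mul (by positivity)]
  gcongr
  refine (measureReal_dotProduct_self_le_inv_25_le hk).trans ?_
  gcongr
  exact (pow_le_of_le_one (by norm_num) (by norm_num) hk.ne').trans
    (one_third_le_measureReal_shell hk)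

lemma gaussianPDF_mul_measure_le_shell (hk : 0 < k) :
    gaussianPDF 0 (k : ℝ≥0)⁻¹ 0 * gaussianVec (Fin k) (k : ℝ≥0)⁻¹ {g | g ⬝ᵥ g ≤ 1 / 25} ≤
      gaussianPDF 0 (k : ℝ≥0)⁻¹ (1 / 5) *
        gaussianVec (Fin k) (k : ℝ≥0)⁻¹ {g | 1 / 25 < g ⬝ᵥ g ∧ g ⬝ᵥ g < 4} := by
  have hdensity : gaussianPDF 0 (k : ℝ≥0)⁻¹ (1 / 5) =
      .ofReal (Real.exp (-(k / 50))) * gaussianPDF 0 (k : ℝ≥0)⁻¹ 0 := by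
    rw [← zero_add (1 / 5 : ℝ), gaussianPDF_add_eq_mul, NNReal.coe_inv, NNReal.coe_natCast]
    congr 3
    field_simp
    norm_num
  rw [hdensity, mul_comm (ENNReal.ofReal _), mul_assoc]
  gcongr
  exact measure_dotProduct_self_le_inv_25_le_shell hk

end NormalizedGaussianVector

section MarginProbability

variable {k : ℕ} {θ : ℝ}

/-- The law of the rounding variables `t`. -/
abbrev uniformVec (k : ℕ) : Measure (Fin k → ℝ) :=
  Measure.pi fun _ => volume.restrict (Icc (0 : ℝ) 1)

/-- The probability that a rounded margin exceeds `θ` when the original margin is `α`: the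
coordinates `((g, v), t)` stand for `g = A w`, `α g + √(1 - α²) v = A x` and the rounding
variables. -/
def marginProb (k : ℕ) (θ α : ℝ) : ℝ≥0∞ :=
  (((gaussianVec (Fin k) (k : ℝ≥0)⁻¹).prod (gaussianVec (Fin k) (k : ℝ≥0)⁻¹)).prod
      (uniformVec k))
    {q | θ < gridRound k q.1.1 q.2 ⬝ᵥ (α • q.1.1 + √(1 - α ^ 2) • q.1.2)}

lemma measurableSet_lt_gridRound_dotProduct (k : ℕ) (θ α : ℝ) :
    MeasurableSet {q : ((Fin k → ℝ) × (Fin k → ℝ)) × (Fin k → ℝ) |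
      θ < gridRound k q.1.1 q.2 ⬝ᵥ (α • q.1.1 + √(1 - α ^ 2) • q.1.2)} :=
  measurableSet_lt measurable_const <| measurable_dotProduct
    ((measurable_gridRound k).comp (measurable_fst.fst.prodMk measurable_snd)) (by fun_prop)

lemma marginProb_eq_lintegral (hk : 0 < k) {α : ℝ} (hα : α ^ 2 < 1) :
    marginProb k θ α = ∫⁻ t, ∫⁻ g, gaussianReal 0 (k : ℝ≥0)⁻¹
      (Ioi (threshold (gridRound k g t) g θ α)) ∂gaussianVec (Fin k) (k : ℝ≥0)⁻¹
        ∂uniformVec k := by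
  have hmeas := measurableSet_lt_gridRound_dotProduct k θ α
  rw [marginProb, Measure.prod_apply_symm hmeas]
  refine lintegral_congr fun t => ?_
  rw [Measure.prod_apply (measurable_prodMk_right hmeas)]
  exact lintegral_congr fun g => gaussianVec_lt_dotProduct hα
    ((by norm_num : (0 : ℝ) < 1 / 400).trans_le (le_gridRound_dotProduct_self hk g t))

lemma monotoneOn_marginProb (hk : 0 < k) (hθ : |θ| ≤ 1 / 200) :
    MonotoneOn (marginProb k θ) (Icc (-(1 / 200)) (1 / 200)) := by
  intro α₁ hα₁ α₂ hα₂ h₁₂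
  have hv : (k : ℝ≥0)⁻¹ ≠ 0 := by positivity
  have hnormSq : Measurable fun g : Fin k → ℝ => g ⬝ᵥ g := by fun_prop
  rw [marginProb_eq_lintegral hk (sq_lt_one_of_mem_Icc (by norm_num) hα₁),
    marginProb_eq_lintegral hk (sq_lt_one_of_mem_Icc (by norm_num) hα₂)]
  refine lintegral_mono fun t => lintegral_le_lintegral_of_add_indicator_le
    (hnormSq measurableSet_Ioo) (hnormSq measurableSet_Iic) (fun g =>
      gaussianReal_Ioi_threshold_add_indicator_le hv hθ (gridRound_sub_dotProduct_self_le hk g t)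
        (le_gridRound_dotProduct_self hk g t) hα₁ hα₂ h₁₂) ?_ ?_
  · rw [mul_right_comm, mul_right_comm (gaussianPDF 0 _ (1 / 5))]
    gcongr ?_ * _
    exact gaussianPDF_mul_measure_le_shell hk
  · exact ENNReal.mul_ne_top (ENNReal.mul_ne_top ENNReal.ofReal_ne_top ENNReal.ofReal_ne_top)
      (measure_ne_top _ _)

lemma roundMeasure_eq_marginProb {m : ℕ} {w x : Fin m → ℝ} {α : ℝ} (hw : w ⬝ᵥ w = 1)
    (hx : x ⬝ᵥ x = 1) (hwx : w ⬝ᵥ x = α) (hα : α ^ 2 < 1) :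
    roundMeasure k m {p | θ < hRound p.1 p.2 w ⬝ᵥ (.of p.1 *ᵥ x)} = marginProb k θ α := by
  obtain ⟨u, hu, hwu, hxu⟩ := exists_eq_smul_add_sqrt_smul hw hx hwx hα
  have hpres := (measurePreserving_mulVec_prod (κ := Fin k) (v := (k : ℝ≥0)⁻¹) hw hu hwu).prod
    (MeasurePreserving.id (uniformVec k))
  rw [marginProb, ← hpres.measure_preimage
    (measurableSet_lt_gridRound_dotProduct k θ α).nullMeasurableSet]
  congr 1 with p
  rw [mem_ofPred_eq, hRound_eq_gridRound, hxu, Matrix.mulVec_add, Matrix.mulVec_smul,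
    Matrix.mulVec_smul]
  rfl

lemma roundMeasure_label_eq_marginProb {m : ℕ} {w x : Fin m → ℝ} {y : ℝ}
    (hw : ∑ j, w j ^ 2 = 1) (hx : ∑ j, x j ^ 2 = 1) (hy : y = 1 ∨ y = -1)
    (hα : (y * dotp w x) ^ 2 < 1) :
    roundMeasure k m {p | θ < y * ∑ r, hRound p.1 p.2 w r * ∑ s, p.1 r s * x s} =
      marginProb k θ (y * dotp w x) := by
  simp only [sq] at hw hx
  have hyx : (y • x) ⬝ᵥ (y • x) = 1 := by
    rw [smul_dotProduct, dotProduct_smul, smul_smul, smul_eq_mul, mul_self_eq_one_iff.2 hy,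
      one_mul, dotProduct, hx]
  refine Eq.trans ?_ (roundMeasure_eq_marginProb hw hyx (dotProduct_smul y w x) hα)
  congr 1 with p
  rw [mem_ofPred_eq, mem_ofPred_eq, Matrix.mulVec_smul, dotProduct_smul]
  rfl

end MarginProbability

theorem statement14_general {m k : ℕ} (hk : 0 < k) {θ : ℝ} (hθ : |θ| ≤ 1 / 200)
    {w₁ x₁ w₂ x₂ : Fin m → ℝ} {y₁ y₂ : ℝ}
    (hw₁ : ∑ j, w₁ j ^ 2 = 1) (hx₁ : ∑ j, x₁ j ^ 2 = 1)
    (hw₂ : ∑ j, w₂ j ^ 2 = 1) (hx₂ : ∑ j, x₂ j ^ 2 = 1)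
    (hy₁ : y₁ = 1 ∨ y₁ = -1) (hy₂ : y₂ = 1 ∨ y₂ = -1)
    (hlower : -(1 / 200) ≤ y₁ * dotp w₁ x₁) (hle : y₁ * dotp w₁ x₁ ≤ y₂ * dotp w₂ x₂)
    (hupper : y₂ * dotp w₂ x₂ ≤ 1 / 200) :
    roundMeasure k m {p | θ < y₁ * ∑ r, hRound p.1 p.2 w₁ r * ∑ s, p.1 r s * x₁ s} ≤
      roundMeasure k m {p | θ < y₂ * ∑ r, hRound p.1 p.2 w₂ r * ∑ s, p.1 r s * x₂ s} := by
  have hmem₁ : y₁ * dotp w₁ x₁ ∈ Icc (-(1 / 200)) (1 / 200) := ⟨hlower, hle.trans hupper⟩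
  have hmem₂ : y₂ * dotp w₂ x₂ ∈ Icc (-(1 / 200)) (1 / 200) := ⟨hlower.trans hle, hupper⟩
  rw [roundMeasure_label_eq_marginProb hw₁ hx₁ hy₁ (sq_lt_one_of_mem_Icc (by norm_num) hmem₁),
    roundMeasure_label_eq_marginProb hw₂ hx₂ hy₂ (sq_lt_one_of_mem_Icc (by norm_num) hmem₂)]
  exact monotoneOn_marginProb hk hθ hmem₁ hmem₂ hle

/-- (Claim A.3 of the paper.) Monotonicity of the probability that the
rounded margin exceeds `γ_i/2`, as a function of the original margin in `[0, γ_i]`. -/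
theorem statement14 : ∃ cγ : ℝ, 0 < cγ ∧ ∃ k₀ : ℕ, ∀ (m k : ℕ), k₀ ≤ k →
    ∀ γi : ℝ, 0 < γi → γi ≤ cγ →
    ∀ (w₁ x₁ w₂ x₂ : Fin m → ℝ) (y₁ y₂ : ℝ),
    (∑ j, w₁ j ^ 2) = 1 → (∑ j, x₁ j ^ 2) = 1 →
    (∑ j, w₂ j ^ 2) = 1 → (∑ j, x₂ j ^ 2) = 1 →
    (y₁ = 1 ∨ y₁ = -1) → (y₂ = 1 ∨ y₂ = -1) →
    0 ≤ y₁ * dotp w₁ x₁ → y₁ * dotp w₁ x₁ ≤ y₂ * dotp w₂ x₂ →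
    y₂ * dotp w₂ x₂ ≤ γi →
    roundMeasure k m
        {p | γi / 2 < y₁ * ∑ r, hRound p.1 p.2 w₁ r * ∑ s, p.1 r s * x₁ s} ≤
      roundMeasure k m
        {p | γi / 2 < y₂ * ∑ r, hRound p.1 p.2 w₂ r * ∑ s, p.1 r s * x₂ s} :=
  ⟨1 / 200, by norm_num, 1, fun _ _ hk _ hγ hγle _ _ _ _ _ _ hw₁ hx₁ hw₂ hx₂ hy₁ hy₂ hnn hle hγi =>
    statement14_general hk (abs_le.2 ⟨by linarith, by linarith⟩) hw₁ hx₁ hw₂ hx₂ hy₁ hy₂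
      (by linarith) hle (hγi.trans hγle)⟩
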